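/- Let d ≥ 2, γ > 0, and let σ_{d−1} denote the surface measure on the unit sphere S^{d−1} ⊂ ℝ^d. Let x, x' ∈ ℝ^d with x ≠ x', set r = ‖x − x'‖ and e = (x − x')/‖x − x'‖. Then ∫_{S^{d−1}} (θ·x)(θ·x') exp(−γ (θ·(x − x'))²) dσ_{d−1}(θ) = (x·x' − (e·x)(e·x')) · (J₁(γr²) − J₂(γr²)) / (d − 1) + (e·x)(e·x') · J₂(γr²), where J₁(c) = ∫_{S^{d−1}} exp(−c θ₁²) dσ_{d−1}(θ) and J₂(c) = ∫_{S^{d−1}} θ₁² exp(−c θ₁²) dσ_{d−1}(θ). -/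

import Mathlib

/-!
The surface measure is invariant under every linear isometry of `ℝ^d`
(`integral_sphere_comp_isometry`). A reflection carrying `e = (x − x')/‖x − x'‖` to the first
basis vector therefore reduces the claim to a bilinear form in the coordinates of the reflected
vectors, with coefficients the moments `M i j = ∫ θᵢ θⱼ exp(−c θ₁²)`, where `c = γ ‖x − x'‖²`.

Flipping the sign of a coordinate other than the first shows that `M` is diagonal
(`sphereMoment_off_diag`), and swapping two such coordinates shows that its diagonal entries away
from the first are equal (`sphereMoment_diag_eq`). The first entry is `J₂(c)` by definition, and the
trace is `J₁(c)` because `∑ θᵢ² = 1` on the sphere; hence each other diagonal entry is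
`(J₁(c) − J₂(c)) / (d − 1)`.
-/

open MeasureTheory Real

/-- The (unnormalized) surface measure on the unit sphere `S^{d−1} ⊂ ℝ^d`. -/
noncomputable def sphereSurfaceMeasure (d : ℕ) :
    Measure (Metric.sphere (0 : EuclideanSpace ℝ (Fin d)) 1) :=
  (volume : Measure (EuclideanSpace ℝ (Fin d))).toSphere

/-- `J₁(c) = ∫_{S^{d−1}} exp(−c θ₁²) dσ_{d−1}(θ)`. -/
noncomputable def J1 (d : ℕ) (hd : 2 ≤ d) (c : ℝ) : ℝ :=
  ∫ θ : Metric.sphere (0 : EuclideanSpace ℝ (Fin d)) 1,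
    Real.exp (-c * ((θ : EuclideanSpace ℝ (Fin d)) ⟨0, by omega⟩) ^ 2)
    ∂(sphereSurfaceMeasure d)

/-- `J₂(c) = ∫_{S^{d−1}} θ₁² exp(−c θ₁²) dσ_{d−1}(θ)`. -/
noncomputable def J2 (d : ℕ) (hd : 2 ≤ d) (c : ℝ) : ℝ :=
  ∫ θ : Metric.sphere (0 : EuclideanSpace ℝ (Fin d)) 1,
    ((θ : EuclideanSpace ℝ (Fin d)) ⟨0, by omega⟩) ^ 2
      * Real.exp (-c * ((θ : EuclideanSpace ℝ (Fin d)) ⟨0, by omega⟩) ^ 2)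
    ∂(sphereSurfaceMeasure d)

open scoped Pointwise in
/-- The surface measure on the unit sphere is invariant under linear isometries. -/
lemma integral_sphere_comp_isometry {d : ℕ}
    (R : EuclideanSpace ℝ (Fin d) ≃ₗᵢ[ℝ] EuclideanSpace ℝ (Fin d))
    (f : EuclideanSpace ℝ (Fin d) → ℝ) :
    ∫ θ : Metric.sphere (0 : EuclideanSpace ℝ (Fin d)) 1, f (R θ) ∂(sphereSurfaceMeasure d)
      = ∫ θ : Metric.sphere (0 : EuclideanSpace ℝ (Fin d)) 1, f θ ∂(sphereSurfaceMeasure d) := by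
  let T : Metric.sphere (0 : EuclideanSpace ℝ (Fin d)) 1 ≃ₜ
      Metric.sphere (0 : EuclideanSpace ℝ (Fin d)) 1 :=
    R.toHomeomorph.subtype (fun x => by simp)
  have hT : ∀ θ, (T θ : EuclideanSpace ℝ (Fin d)) = R θ := fun θ => rfl
  have hmp : MeasurePreserving T.toMeasurableEquiv (sphereSurfaceMeasure d)
      (sphereSurfaceMeasure d) := by
    refine ⟨T.toMeasurableEquiv.measurable, ?_⟩
    ext s hs
    rw [Measure.map_apply T.toMeasurableEquiv.measurable hs, sphereSurfaceMeasure,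
      Measure.toSphere_apply' _ hs,
      Measure.toSphere_apply' _ (T.toMeasurableEquiv.measurable hs)]
    congr 1
    -- `R` commutes with taking the cone over a subset of the sphere.
    have hcone : Set.Ioo (0 : ℝ) 1 •
        ((↑) '' (T.toMeasurableEquiv ⁻¹' s) : Set (EuclideanSpace ℝ (Fin d)))
        = R ⁻¹' (Set.Ioo (0 : ℝ) 1 • ((↑) '' s)) := by
      ext v
      simp only [Set.mem_preimage, Set.mem_smul, Set.mem_image]
      constructor
      · rintro ⟨t, ht, _, ⟨θ, hθ, rfl⟩, rfl⟩
        exact ⟨t, ht, _, ⟨T θ, hθ, rfl⟩, by rw [hT, map_smul]⟩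
      · rintro ⟨t, ht, _, ⟨θ, hθ, rfl⟩, h⟩
        refine ⟨t, ht, _, ⟨T.symm θ, ?_, rfl⟩, ?_⟩
        · change T (T.symm θ) ∈ s
          simpa using hθ
        · apply R.injective
          rw [← h, map_smul, ← hT, T.apply_symm_apply]
    rw [hcone]
    exact R.measurePreserving.measure_preimage_equiv (f := R.toMeasurableEquiv) _
  exact hmp.integral_comp' (fun θ : Metric.sphere (0 : EuclideanSpace ℝ (Fin d)) 1 => f θ)

/-- The weighted second moment `∫ θᵢ θⱼ exp(−c θ_k²) dσ(θ)` over the unit sphere. -/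
noncomputable def sphereMoment (d : ℕ) (c : ℝ) (k i j : Fin d) : ℝ :=
  ∫ θ : Metric.sphere (0 : EuclideanSpace ℝ (Fin d)) 1,
    (θ : EuclideanSpace ℝ (Fin d)) i * (θ : EuclideanSpace ℝ (Fin d)) j
      * Real.exp (-c * ((θ : EuclideanSpace ℝ (Fin d)) k) ^ 2)
    ∂(sphereSurfaceMeasure d)

lemma sphereMoment_comm {d : ℕ} (c : ℝ) (k i j : Fin d) :
    sphereMoment d c k i j = sphereMoment d c k j i := by
  simp only [sphereMoment, mul_comm]

lemma integrable_sphereMoment {d : ℕ} (c : ℝ) (k i j : Fin d) :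
    Integrable (fun θ : Metric.sphere (0 : EuclideanSpace ℝ (Fin d)) 1 =>
      (θ : EuclideanSpace ℝ (Fin d)) i * (θ : EuclideanSpace ℝ (Fin d)) j
        * Real.exp (-c * ((θ : EuclideanSpace ℝ (Fin d)) k) ^ 2)) (sphereSurfaceMeasure d) := by
  unfold sphereSurfaceMeasure
  apply Continuous.integrable_of_hasCompactSupport
  · fun_prop
  · exact HasCompactSupport.of_compactSpace _

/-- Flipping the sign of the `i`-th coordinate, `i ≠ k`, negates the moment. -/
lemma sphereMoment_off_diag_aux {d : ℕ} (c : ℝ) {k i j : Fin d} (hij : i ≠ j) (hik : i ≠ k) :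
    sphereMoment d c k i j = 0 := by
  have h := integral_sphere_comp_isometry
    (LinearIsometryEquiv.piLpCongrRight 2 (fun l : Fin d =>
      if l = i then LinearIsometryEquiv.neg ℝ else LinearIsometryEquiv.refl ℝ ℝ))
    (fun θ => θ i * θ j * Real.exp (-c * (θ k) ^ 2))
  simp only [LinearIsometryEquiv.piLpCongrRight_apply, if_true, if_neg hij.symm, if_neg hik.symm,
    LinearIsometryEquiv.coe_neg, LinearIsometryEquiv.coe_refl, id, neg_mul, integral_neg] at h
  simp only [sphereMoment, neg_mul]
  linarith

lemma sphereMoment_off_diag {d : ℕ} (c : ℝ) {k i j : Fin d} (hij : i ≠ j) :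
    sphereMoment d c k i j = 0 := by
  by_cases hik : i = k
  · rw [sphereMoment_comm]
    exact sphereMoment_off_diag_aux c hij.symm (fun h => hij (hik.trans h.symm))
  · exact sphereMoment_off_diag_aux c hij hik

/-- Swapping the coordinates `i` and `j`, both different from `k`, preserves the weight. -/
lemma sphereMoment_diag_eq {d : ℕ} (c : ℝ) {k i j : Fin d} (hik : i ≠ k) (hjk : j ≠ k) :
    sphereMoment d c k i i = sphereMoment d c k j j := by
  have h := integral_sphere_comp_isometry
    (LinearIsometryEquiv.piLpCongrLeft 2 ℝ ℝ (Equiv.swap i j))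
    (fun θ => θ j * θ j * Real.exp (-c * (θ k) ^ 2))
  simp only [LinearIsometryEquiv.piLpCongrLeft_apply, Equiv.piCongrLeft'_apply, Equiv.symm_swap,
    Equiv.swap_apply_right, Equiv.swap_apply_of_ne_of_ne hik.symm hjk.symm] at h
  exact h

lemma sphereMoment_first {d : ℕ} (hd : 2 ≤ d) (c : ℝ) :
    sphereMoment d c ⟨0, by omega⟩ ⟨0, by omega⟩ ⟨0, by omega⟩ = J2 d hd c := by
  simp only [sphereMoment, J2, sq]

lemma sum_sphereMoment_diag {d : ℕ} (hd : 2 ≤ d) (c : ℝ) :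
    ∑ i, sphereMoment d c ⟨0, by omega⟩ i i = J1 d hd c := by
  simp only [sphereMoment]
  rw [← integral_finsetSum _ (fun i _ => integrable_sphereMoment c _ i i), J1]
  congr 1 with θ
  have hθ : ∑ i, (θ : EuclideanSpace ℝ (Fin d)) i * (θ : EuclideanSpace ℝ (Fin d)) i = 1 := by
    have h1 : ‖(θ : EuclideanSpace ℝ (Fin d))‖ ^ 2 = 1 := by simp
    rw [EuclideanSpace.real_norm_sq_eq] at h1
    simpa only [sq] using h1
  rw [← Finset.sum_mul, hθ, one_mul]

lemma sphereMoment_diag {d : ℕ} (hd : 2 ≤ d) (c : ℝ) {i : Fin d} (hi : i ≠ ⟨0, by omega⟩) :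
    sphereMoment d c ⟨0, by omega⟩ i i = (J1 d hd c - J2 d hd c) / ((d : ℝ) - 1) := by
  have hd' : (d : ℝ) - 1 ≠ 0 := by
    have : (2 : ℝ) ≤ d := by exact_mod_cast hd
    linarith
  rw [eq_div_iff hd', ← sum_sphereMoment_diag hd c, ← sphereMoment_first hd c,
    ← Finset.add_sum_erase _ _ (Finset.mem_univ (⟨0, by omega⟩ : Fin d)),
    Finset.sum_congr rfl (fun j hj =>
      sphereMoment_diag_eq c (Finset.ne_of_mem_erase hj) hi), Finset.sum_const,
    Finset.card_erase_of_mem (Finset.mem_univ _), Finset.card_univ, Fintype.card_fin,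
    nsmul_eq_mul, Nat.cast_sub (by omega)]
  push_cast
  ring

/-- The claimed formula when `e` is the first standard basis vector. -/
lemma integral_sphere_first_axis {d : ℕ} (hd : 2 ≤ d) (c : ℝ)
    (y y' : EuclideanSpace ℝ (Fin d)) :
    ∫ θ : Metric.sphere (0 : EuclideanSpace ℝ (Fin d)) 1,
        (∑ i, (θ : EuclideanSpace ℝ (Fin d)) i * y i)
          * (∑ i, (θ : EuclideanSpace ℝ (Fin d)) i * y' i)
          * Real.exp (-c * ((θ : EuclideanSpace ℝ (Fin d)) ⟨0, by omega⟩) ^ 2)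
        ∂(sphereSurfaceMeasure d)
      = ((∑ i, y i * y' i) - y ⟨0, by omega⟩ * y' ⟨0, by omega⟩)
          * ((J1 d hd c - J2 d hd c) / ((d : ℝ) - 1))
        + y ⟨0, by omega⟩ * y' ⟨0, by omega⟩ * J2 d hd c := by
  have hexp : ∀ θ : Metric.sphere (0 : EuclideanSpace ℝ (Fin d)) 1,
      (∑ i, (θ : EuclideanSpace ℝ (Fin d)) i * y i)
          * (∑ i, (θ : EuclideanSpace ℝ (Fin d)) i * y' i)
          * Real.exp (-c * ((θ : EuclideanSpace ℝ (Fin d)) ⟨0, by omega⟩) ^ 2)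
        = ∑ i, ∑ j, y i * y' j * ((θ : EuclideanSpace ℝ (Fin d)) i
            * (θ : EuclideanSpace ℝ (Fin d)) j
            * Real.exp (-c * ((θ : EuclideanSpace ℝ (Fin d)) ⟨0, by omega⟩) ^ 2)) := by
    intro θ
    rw [Finset.sum_mul_sum, Finset.sum_mul]
    refine Finset.sum_congr rfl fun i _ => ?_
    rw [Finset.sum_mul]
    refine Finset.sum_congr rfl fun j _ => ?_
    ring
  have hint := fun i j => (integrable_sphereMoment c (⟨0, by omega⟩ : Fin d) i j).const_mul
    (y i * y' j)
  simp_rw [hexp]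
  rw [integral_finsetSum _ (fun i _ => integrable_finsetSum _ (fun j _ => hint i j))]
  have hdiag : ∀ i, ∫ θ : Metric.sphere (0 : EuclideanSpace ℝ (Fin d)) 1,
      ∑ j, y i * y' j * ((θ : EuclideanSpace ℝ (Fin d)) i
            * (θ : EuclideanSpace ℝ (Fin d)) j
            * Real.exp (-c * ((θ : EuclideanSpace ℝ (Fin d)) ⟨0, by omega⟩) ^ 2))
        ∂(sphereSurfaceMeasure d)
      = y i * y' i * sphereMoment d c ⟨0, by omega⟩ i i := by
    intro i
    rw [integral_finsetSum _ (fun j _ => hint i j)]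
    simp_rw [integral_const_mul]
    change ∑ j, y i * y' j * sphereMoment d c ⟨0, by omega⟩ i j = _
    refine Finset.sum_eq_single i (fun j _ hj => ?_) (by simp)
    rw [sphereMoment_off_diag c hj.symm, mul_zero]
  simp_rw [hdiag]
  rw [← Finset.add_sum_erase _ _ (Finset.mem_univ (⟨0, by omega⟩ : Fin d)),
    ← Finset.add_sum_erase _ (fun i => y i * y' i) (Finset.mem_univ (⟨0, by omega⟩ : Fin d)),
    sphereMoment_first hd c,
    Finset.sum_congr rfl (fun j hj => by
      rw [sphereMoment_diag hd c (Finset.ne_of_mem_erase hj)]), ← Finset.sum_mul]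
  ring

lemma sum_mul_comp_isometry {d : ℕ}
    (R : EuclideanSpace ℝ (Fin d) ≃ₗᵢ[ℝ] EuclideanSpace ℝ (Fin d))
    (u v : EuclideanSpace ℝ (Fin d)) : ∑ i, R u i * R v i = ∑ i, u i * v i := by
  have h := R.inner_map_map v u
  simp only [PiLp.inner_apply] at h
  exact h


/-- **Sphere integral of `(θ·x)(θ·x') exp(−γ(θ·(x−x'))²)` in terms of `J₁, J₂`.**
With `r = ‖x − x'‖` and `e = (x − x')/‖x − x'‖`, the integral equals
`(x·x' − (e·x)(e·x'))(J₁(γr²) − J₂(γr²))/(d−1) + (e·x)(e·x') J₂(γr²)`. -/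
theorem sphere_integral_projection_product
    (d : ℕ) (hd : 2 ≤ d) (γ : ℝ) (hγ : 0 < γ)
    (x x' : EuclideanSpace ℝ (Fin d)) (hxx : x ≠ x') :
    (∫ θ : Metric.sphere (0 : EuclideanSpace ℝ (Fin d)) 1,
        (∑ i, (θ : EuclideanSpace ℝ (Fin d)) i * x i)
          * (∑ i, (θ : EuclideanSpace ℝ (Fin d)) i * x' i)
          * Real.exp (-γ * (∑ i, (θ : EuclideanSpace ℝ (Fin d)) i * (x i - x' i)) ^ 2)
        ∂(sphereSurfaceMeasure d))
      = ((∑ i, x i * x' i)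
            - (∑ i, (‖x - x'‖⁻¹ • (x - x')) i * x i)
              * (∑ i, (‖x - x'‖⁻¹ • (x - x')) i * x' i))
          * ((J1 d hd (γ * ‖x - x'‖ ^ 2) - J2 d hd (γ * ‖x - x'‖ ^ 2)) / ((d : ℝ) - 1))
        + (∑ i, (‖x - x'‖⁻¹ • (x - x')) i * x i)
          * (∑ i, (‖x - x'‖⁻¹ • (x - x')) i * x' i)
          * J2 d hd (γ * ‖x - x'‖ ^ 2) := by
  have hr : ‖x - x'‖ ≠ 0 := norm_ne_zero_iff.mpr (sub_ne_zero.mpr hxx)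
  set e : EuclideanSpace ℝ (Fin d) := ‖x - x'‖⁻¹ • (x - x') with he
  set e₀ : EuclideanSpace ℝ (Fin d) := EuclideanSpace.single ⟨0, by omega⟩ 1 with he₀
  have hnorm : ‖e‖ = ‖e₀‖ := by
    rw [he, norm_smul, norm_inv, norm_norm, inv_mul_cancel₀ hr, he₀]
    simp
  obtain ⟨R, hR⟩ : ∃ R : EuclideanSpace ℝ (Fin d) ≃ₗᵢ[ℝ] EuclideanSpace ℝ (Fin d), R e = e₀ :=
    ⟨_, Submodule.reflection_sub hnorm⟩
  have hfirst : ∀ v : EuclideanSpace ℝ (Fin d), ∑ i, e i * v i = R v ⟨0, by omega⟩ := by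
    intro v
    rw [← sum_mul_comp_isometry R, hR, he₀]
    simp
  have hdiff : ∀ θ : EuclideanSpace ℝ (Fin d),
      ∑ i, θ i * (x i - x' i) = ‖x - x'‖ * R θ ⟨0, by omega⟩ := by
    intro θ
    rw [← hfirst, Finset.mul_sum]
    refine Finset.sum_congr rfl fun i _ => ?_
    simp only [he, PiLp.smul_apply, PiLp.sub_apply, smul_eq_mul]
    field_simp
  rw [hfirst, hfirst, ← sum_mul_comp_isometry R x x', ← integral_sphere_first_axis hd,
    ← integral_sphere_comp_isometry R (fun θ => (∑ i, θ i * R x i) * (∑ i, θ i * R x' i)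
      * Real.exp (-(γ * ‖x - x'‖ ^ 2) * (θ ⟨0, by omega⟩) ^ 2))]
  congr 1 with θ
  rw [hdiff, sum_mul_comp_isometry, sum_mul_comp_isometry]
  congr 2
  ring
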